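/- Theorem (convergence of the nudged particle filter): Let (π_t)_{0≤t≤T} be the optimal filters of a state-space model with positive bounded likelihoods g_t, prior π_0 and Markov kernels τ_t. Let π_t^N be the output of the nudged particle filter in which, at each step, at most M ≤ √N particles are modified by an arbitrary map α_t : X → X before weighting and multinomial resampling. Then for every t ∈ {1,…,T}, every bounded measurable φ : X → ℝ, and every p ≥ 1, there exists a constant c_{t,p} < ∞ independent of N such that ‖(φ, π_t^N) − (φ, π_t)‖_p ≤ c_{t,p}‖φ‖_∞/√N. -/

import Mathlib

open MeasureTheory ProbabilityTheory

/-!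
Measure how well a random measure `M` approximates `μ` by the least `ε` such that
`‖(φ, M) - (φ, μ)‖_p ≤ ε ‖φ‖_∞` for all bounded measurable `φ`. Each operation of the filter acts
on this error in a simple way. A Markov kernel does not increase it. Replacing a random measure by
the empirical measure of `N` conditionally independent particles with that mean adds `C_p / √N`: by
Hoeffding's lemma the centred sum of `N` such terms is sub-Gaussian with variance proxy `N ‖φ‖_∞²`,
and the moments of a sub-Gaussian variable are controlled by its proxy; this replaces the
Marcinkiewicz–Zygmund inequality. Moving `m ≤ √N` particles changes the integral of `φ` by at most
`2 ‖φ‖_∞ m / N ≤ 2 ‖φ‖_∞ / √N`. Bayes' rule with likelihood `g` multiplies the error by at most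
`2 ‖g‖_∞ / (g, μ)`. So an error `O(1 / √N)` is preserved by each time step.
-/

open scoped NNReal ENNReal

section SubgaussianMoments

variable {Ω : Type*} [MeasurableSpace Ω] {P : Measure Ω} {S : Ω → ℝ} {c : ℝ≥0}

lemma integral_exp_abs_mul_le_of_hasSubgaussianMGF (h : HasSubgaussianMGF S c P) (t : ℝ) :
    ∫ ω, Real.exp |t * S ω| ∂P ≤ 2 * Real.exp (c * t ^ 2 / 2) := by
  have hint (u : ℝ) : Integrable (fun ω ↦ Real.exp (u * S ω)) P := h.integrable_exp_mul u
  calc ∫ ω, Real.exp |t * S ω| ∂P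
      ≤ ∫ ω, (Real.exp (t * S ω) + Real.exp (-t * S ω)) ∂P := by
        refine integral_mono_of_nonneg (ae_of_all _ fun ω ↦ (Real.exp_pos _).le)
          ((hint t).add (hint (-t))) (ae_of_all _ fun ω ↦ ?_)
        simpa only [neg_mul] using Real.exp_abs_le (t * S ω)
    _ = mgf S P t + mgf S P (-t) := integral_add (hint t) (hint (-t))
    _ ≤ Real.exp (c * t ^ 2 / 2) + Real.exp (c * (-t) ^ 2 / 2) :=
        add_le_add (h.mgf_le t) (h.mgf_le (-t))
    _ = 2 * Real.exp (c * t ^ 2 / 2) := by rw [neg_sq, two_mul]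

lemma integral_abs_rpow_le_of_hasSubgaussianMGF (h : HasSubgaussianMGF S c P) {p : ℝ}
    (hp : 0 < p) :
    ∫ ω, |S ω| ^ p ∂P ≤ 2 * Real.exp (1 / 2) * (p * √c) ^ p := by
  rcases eq_or_ne c 0 with rfl | hc
  · have hzero : (fun ω ↦ |S ω| ^ p) =ᵐ[P] 0 := by
      filter_upwards [h.ae_eq_zero_of_hasSubgaussianMGF_zero] with ω hω
      simp [hω, Real.zero_rpow hp.ne']
    rw [integral_congr_ae hzero]
    simp [Real.zero_rpow hp.ne']
  have hc' : (0 : ℝ) < c := by positivity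
  -- The choice `t = c ^ (-1 / 2)` keeps the exponent `c * t ^ 2 / 2` bounded.
  set t : ℝ := (√c)⁻¹ with ht
  have ht0 : 0 < t := by positivity
  have hmgf : ∫ ω, Real.exp |t * S ω| ∂P ≤ 2 * Real.exp (1 / 2) := by
    convert integral_exp_abs_mul_le_of_hasSubgaussianMGF h t using 4
    rw [ht, inv_pow, Real.sq_sqrt hc'.le, mul_inv_cancel₀ hc'.ne']
  have hint : Integrable (fun ω ↦ (p * √c) ^ p * Real.exp |t * S ω|) P := by
    simp only [abs_mul, abs_of_pos ht0]
    exact (integrable_exp_mul_abs (h.integrable_exp_mul t) (h.integrable_exp_mul (-t))).const_mul _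
  calc ∫ ω, |S ω| ^ p ∂P
      ≤ ∫ ω, (p * √c) ^ p * Real.exp |t * S ω| ∂P := by
        refine integral_mono_of_nonneg (ae_of_all _ fun ω ↦ by positivity) hint
          (ae_of_all _ fun ω ↦ ?_)
        have hpow := rpow_abs_le_mul_exp_abs (S ω) hp.le ht0.ne'
        rwa [← abs_mul, abs_of_pos ht0, ht, div_inv_eq_mul] at hpow
    _ = (p * √c) ^ p * ∫ ω, Real.exp |t * S ω| ∂P := integral_const_mul _ _
    _ ≤ (p * √c) ^ p * (2 * Real.exp (1 / 2)) := by gcongr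
    _ = 2 * Real.exp (1 / 2) * (p * √c) ^ p := mul_comm _ _

/-- The constant `C_p` in the moment bound `‖S‖_p ≤ C_p √c` for a sub-Gaussian variable `S` with
variance proxy `c`. -/
noncomputable def subgaussianLpConst (p : ℝ≥0) : ℝ≥0 :=
  (2 * Real.exp (1 / 2)).toNNReal ^ (p⁻¹ : ℝ) * p

lemma eLpNorm_le_of_hasSubgaussianMGF (h : HasSubgaussianMGF S c P) {p : ℝ≥0} (hp : p ≠ 0) :
    eLpNorm S p P ≤ ↑(subgaussianLpConst p * NNReal.sqrt c) := by
  have hp' : (0 : ℝ) < p := by positivity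
  rw [← ofReal_lpNorm (h.memLp p), lpNorm_nnreal_eq_integral_norm_rpow hp h.aestronglyMeasurable,
    ← ENNReal.ofReal_coe_nnreal]
  refine ENNReal.ofReal_le_ofReal ?_
  calc (∫ ω, ‖S ω‖ ^ (p : ℝ) ∂P) ^ (p⁻¹ : ℝ)
      ≤ (2 * Real.exp (1 / 2) * (p * √c) ^ (p : ℝ)) ^ (p⁻¹ : ℝ) := by
        gcongr
        exact integral_abs_rpow_le_of_hasSubgaussianMGF h hp'
    _ = ↑(subgaussianLpConst p * NNReal.sqrt c) := by
        rw [Real.mul_rpow (by positivity) (by positivity),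
          Real.rpow_rpow_inv (by positivity) hp'.ne']
        simp only [subgaussianLpConst, NNReal.coe_mul, NNReal.coe_rpow, Real.coe_sqrt, mul_assoc,
          Real.coe_toNNReal _ (show 0 ≤ 2 * Real.exp (1 / 2) by positivity)]

end SubgaussianMoments

section ProductMeasure

lemma nnreal_sqrt_div_self (x : ℝ≥0) : NNReal.sqrt x / x = (NNReal.sqrt x)⁻¹ := by
  ext
  simp [Real.sqrt_div_self]

variable {ι X : Type*} [Fintype ι] [MeasurableSpace X] {μ : ι → Measure X}
  [∀ i, IsProbabilityMeasure (μ i)] {φ : X → ℝ} {B : ℝ≥0}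

-- Hoeffding's lemma: a variable with values in `[-B, B]` is sub-Gaussian with variance proxy `B²`.
lemma hasSubgaussianMGF_sum_sub_integral (hφ : Measurable φ) (hB : ∀ x, |φ x| ≤ B) :
    HasSubgaussianMGF (fun x : ι → X ↦ ∑ i, (φ (x i) - ∫ y, φ y ∂μ i)) (Fintype.card ι * B ^ 2)
      (Measure.pi μ) := by
  have hproxy (i : ι) :
      HasSubgaussianMGF (fun x : ι → X ↦ φ (x i) - ∫ y, φ y ∂μ i) (B ^ 2) (Measure.pi μ) := by
    have hHoeffding := hasSubgaussianMGF_of_mem_Icc (μ := Measure.pi μ)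
      (X := fun x : ι → X ↦ φ (x i)) (hφ.comp (measurable_pi_apply i)).aemeasurable
      (ae_of_all _ fun x ↦ abs_le.1 (hB (x i)))
    rw [integral_comp_eval hφ.aestronglyMeasurable] at hHoeffding
    convert hHoeffding
    ext
    simp [← two_mul]
  have hindep : iIndepFun (fun (i : ι) (x : ι → X) ↦ φ (x i) - ∫ y, φ y ∂μ i) (Measure.pi μ) :=
    iIndepFun_pi (X := fun i y ↦ φ y - ∫ y, φ y ∂μ i) fun i ↦ (hφ.sub_const _).aemeasurable
  simpa using HasSubgaussianMGF.sum_of_iIndepFun hindep (s := Finset.univ) fun i _ ↦ hproxy i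

theorem eLpNorm_average_sub_average_integral_le {p : ℝ≥0} (hp : p ≠ 0) (hφ : Measurable φ)
    (hB : ∀ x, |φ x| ≤ B) :
    eLpNorm (fun x : ι → X ↦ (∑ i, φ (x i)) / Fintype.card ι
        - (∑ i, ∫ y, φ y ∂μ i) / Fintype.card ι) p (Measure.pi μ)
      ≤ ↑(subgaussianLpConst p / NNReal.sqrt (Fintype.card ι) * B) := by
  set N : ℝ≥0 := (Fintype.card ι : ℝ≥0) with hN
  have hsum := eLpNorm_le_of_hasSubgaussianMGF
    (hasSubgaussianMGF_sum_sub_integral (μ := μ) hφ hB) hp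
  have hscale : (fun x : ι → X ↦ (∑ i, φ (x i)) / Fintype.card ι
        - (∑ i, ∫ y, φ y ∂μ i) / Fintype.card ι)
      = (N⁻¹ : ℝ) • fun x : ι → X ↦ ∑ i, (φ (x i) - ∫ y, φ y ∂μ i) := by
    ext x
    simp [hN, Finset.sum_sub_distrib, div_eq_inv_mul, mul_sub]
  calc eLpNorm _ p (Measure.pi μ)
      = ↑N⁻¹ * eLpNorm (fun x : ι → X ↦ ∑ i, (φ (x i) - ∫ y, φ y ∂μ i)) p (Measure.pi μ) := by
        rw [hscale, eLpNorm_const_smul, ← NNReal.coe_inv, NNReal.enorm_eq]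
    _ ≤ ↑N⁻¹ * ↑(subgaussianLpConst p * NNReal.sqrt (N * B ^ 2)) := by gcongr
    _ = ↑(subgaussianLpConst p / NNReal.sqrt N * B) := by
        rw [← ENNReal.coe_mul, NNReal.sqrt_mul, NNReal.sqrt_sq, div_eq_mul_inv _ (NNReal.sqrt N),
          ← nnreal_sqrt_div_self]
        congr 1
        ring

end ProductMeasure

section KernelComposition

variable {Ω Ω' : Type*} [MeasurableSpace Ω] [MeasurableSpace Ω'] {P : Measure Ω}
  {κ : Kernel Ω Ω'}

lemma integral_comp_measure {E : Type*} [NormedAddCommGroup E] [NormedSpace ℝ E] {f : Ω' → E}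
    (hf : Integrable f (κ ∘ₘ P)) : ∫ y, f y ∂(κ ∘ₘ P) = ∫ ω, ∫ y, f y ∂κ ω ∂P := by
  rw [Measure.comp_eq_comp_const_apply] at hf ⊢
  rw [Kernel.integral_comp hf, Kernel.const_apply]

lemma eLpNorm_comp_measure {E : Type*} [NormedAddCommGroup E] [MeasurableSpace E]
    [OpensMeasurableSpace E] {f : Ω' → E} (hf : Measurable f) {p : ℝ≥0} (hp : p ≠ 0) :
    eLpNorm f p (κ ∘ₘ P) = eLpNorm (fun ω ↦ eLpNorm f p (κ ω)) p P := by
  rw [eLpNorm_nnreal_eq_lintegral hp, eLpNorm_nnreal_eq_lintegral hp,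
    Measure.lintegral_bind κ.aemeasurable (by fun_prop)]
  simp only [enorm_eq_self, eLpNorm_nnreal_pow_eq_lintegral hp]

lemma eLpNorm_sub_const_comp_measure_le {E : Type*} [NormedAddCommGroup E] [MeasurableSpace E]
    [BorelSpace E] [SecondCountableTopology E] [IsProbabilityMeasure P] [IsMarkovKernel κ]
    {p : ℝ≥0} (hp : 1 ≤ p) {f : Ω' → E} (hf : Measurable f) {h : Ω → E} (hh : Measurable h)
    (a : E) {δ : ℝ≥0∞} (hδ : ∀ ω, eLpNorm (fun y ↦ f y - h ω) p (κ ω) ≤ δ) :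
    eLpNorm (fun y ↦ f y - a) p (κ ∘ₘ P) ≤ δ + eLpNorm (fun ω ↦ h ω - a) p P := by
  have hp' : (1 : ℝ≥0∞) ≤ p := by exact_mod_cast hp
  have hp0 : p ≠ 0 := (zero_lt_one.trans_le hp).ne'
  have hconst (ω : Ω) : eLpNorm (fun _ : Ω' ↦ h ω - a) p (κ ω) = ‖h ω - a‖ₑ := by
    simp [eLpNorm_const' _ (ENNReal.coe_ne_zero.2 hp0) ENNReal.coe_ne_top]
  have hfiber (ω : Ω) : eLpNorm (fun y ↦ f y - a) p (κ ω) ≤ δ + ‖h ω - a‖ₑ :=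
    calc eLpNorm (fun y ↦ f y - a) p (κ ω)
        = eLpNorm ((fun y ↦ f y - h ω) + fun _ ↦ h ω - a) p (κ ω) := by
          congr 1; ext y; simp
      _ ≤ eLpNorm (fun y ↦ f y - h ω) p (κ ω) + eLpNorm (fun _ : Ω' ↦ h ω - a) p (κ ω) :=
          eLpNorm_add_le (by fun_prop) (by fun_prop) hp'
      _ ≤ δ + ‖h ω - a‖ₑ := by rw [hconst]; gcongr; exact hδ ω
  calc eLpNorm (fun y ↦ f y - a) p (κ ∘ₘ P)
      = eLpNorm (fun ω ↦ eLpNorm (fun y ↦ f y - a) p (κ ω)) p P :=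
        eLpNorm_comp_measure (hf.sub_const a) hp0
    _ ≤ eLpNorm ((fun _ ↦ δ) + fun ω ↦ ‖h ω - a‖ₑ) p P :=
        eLpNorm_mono_enorm fun ω ↦ by simpa using hfiber ω
    _ ≤ eLpNorm (fun _ : Ω ↦ δ) p P + eLpNorm (fun ω ↦ ‖h ω - a‖ₑ) p P :=
        eLpNorm_add_le (by fun_prop) (by fun_prop) hp'
    _ = δ + eLpNorm (fun ω ↦ h ω - a) p P := by
        rw [eLpNorm_enorm (fun ω ↦ h ω - a),
          eLpNorm_const' _ (ENNReal.coe_ne_zero.2 hp0) ENNReal.coe_ne_top]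
        simp

/-- The kernel drawing independent coordinates from `κ i a`. -/
noncomputable def piKernel {ι A : Type*} [Fintype ι] [MeasurableSpace A]
    {X : ι → Type*} [∀ i, MeasurableSpace (X i)] (κ : ∀ i, Kernel A (X i))
    [∀ i, IsMarkovKernel (κ i)] : Kernel A (∀ i, X i) where
  toFun a := Measure.pi fun i ↦ κ i a
  measurable' := by
    refine Measurable.measure_of_isPiSystem_of_isProbabilityMeasure generateFrom_pi.symm
      isPiSystem_pi ?_
    rintro _ ⟨u, hu, rfl⟩
    simp only [Measure.pi_pi]
    exact Finset.measurable_fun_prod _ fun i _ ↦ (κ i).measurable_coe (hu i (Set.mem_univ i))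

instance {ι A : Type*} [Fintype ι] [MeasurableSpace A] {X : ι → Type*}
    [∀ i, MeasurableSpace (X i)] (κ : ∀ i, Kernel A (X i)) [∀ i, IsMarkovKernel (κ i)] :
    IsMarkovKernel (piKernel κ) where
  isProbabilityMeasure a := inferInstanceAs (IsProbabilityMeasure (Measure.pi fun i ↦ κ i a))

end KernelComposition

section WeightedEmpirical

lemma sum_ofReal_ne_zero {ι : Type*} [Fintype ι] [Nonempty ι] {w : ι → ℝ} (hw : ∀ i, 0 < w i) :
    ∑ i, ENNReal.ofReal (w i) ≠ 0 := by
  simp [Finset.sum_eq_zero_iff, hw]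

variable {ι X : Type*} [Fintype ι] [MeasurableSpace X] {g : X → ℝ} {hg : Measurable g}

/-- The random measure `∑ᵢ wᵢ δ_{xᵢ}` with normalized weights `wᵢ ∝ g (xᵢ)`, as a kernel from
particle configurations `x` to the state space: the law from which multinomial resampling draws. -/
noncomputable def weightedEmpirical (ι : Type*) [Fintype ι] (g : X → ℝ) (hg : Measurable g) :
    Kernel (ι → X) X where
  toFun x := ∑ i, (ENNReal.ofReal (g (x i)) / ∑ j, ENNReal.ofReal (g (x j))) •
    Measure.dirac (x i)
  measurable' := by
    refine Measure.measurable_of_measurable_coe _ fun s hs ↦ ?_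
    simp only [Measure.coe_finsetSum, Measure.coe_smul, Finset.sum_apply, Pi.smul_apply,
      smul_eq_mul]
    have hdirac (i : ι) : Measurable fun x : ι → X ↦ Measure.dirac (x i) s :=
      (Measure.measurable_coe hs).comp (Measure.measurable_dirac.comp (measurable_pi_apply i))
    fun_prop

lemma weightedEmpirical_apply (x : ι → X) :
    weightedEmpirical ι g hg x =
      ∑ i, (ENNReal.ofReal (g (x i)) / ∑ j, ENNReal.ofReal (g (x j))) • Measure.dirac (x i) :=
  rfl

lemma isMarkovKernel_weightedEmpirical [Nonempty ι] (hg0 : ∀ x, 0 < g x) :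
    IsMarkovKernel (weightedEmpirical ι g hg) := by
  refine ⟨fun x ↦ ⟨?_⟩⟩
  simp only [weightedEmpirical_apply, Measure.coe_finsetSum, Measure.coe_smul, Finset.sum_apply,
    Pi.smul_apply, measure_univ, smul_eq_mul, mul_one, div_eq_mul_inv, ← Finset.sum_mul]
  exact ENNReal.mul_inv_cancel (sum_ofReal_ne_zero fun i ↦ hg0 (x i))
    (ENNReal.sum_ne_top.2 fun _ _ ↦ ENNReal.ofReal_ne_top)

lemma integral_weightedEmpirical (hg0 : ∀ x, 0 < g x) (x : ι → X) {φ : X → ℝ}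
    (hφ : Measurable φ) :
    ∫ y, φ y ∂weightedEmpirical ι g hg x = (∑ i, φ (x i) * g (x i)) / ∑ i, g (x i) := by
  rw [weightedEmpirical_apply, integral_finsetSum_measure, Finset.sum_div]
  · refine Finset.sum_congr rfl fun i _ ↦ ?_
    rw [integral_smul_measure, integral_dirac' _ _ hφ.stronglyMeasurable, ENNReal.toReal_div,
      ← ENNReal.ofReal_sum_of_nonneg fun j _ ↦ (hg0 _).le, ENNReal.toReal_ofReal (hg0 _).le,
      ENNReal.toReal_ofReal (Finset.sum_nonneg fun j _ ↦ (hg0 _).le), smul_eq_mul]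
    ring
  · intro i _
    have : Nonempty ι := ⟨i⟩
    exact (integrable_dirac' hφ.stronglyMeasurable (by simp)).smul_measure
      (ENNReal.div_ne_top ENNReal.ofReal_ne_top (sum_ofReal_ne_zero fun i ↦ hg0 (x i)))

/-- The empirical measure `N⁻¹ ∑ᵢ δ_{xᵢ}` of a configuration of `N` particles, encoded as the
weighted empirical measure with constant weights. -/
noncomputable def empirical (ι X : Type*) [Fintype ι] [MeasurableSpace X] : Kernel (ι → X) X :=
  weightedEmpirical ι (fun _ ↦ 1) measurable_const

instance [Nonempty ι] : IsMarkovKernel (empirical ι X) :=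
  isMarkovKernel_weightedEmpirical fun _ ↦ one_pos

lemma integral_empirical (x : ι → X) {φ : X → ℝ} (hφ : Measurable φ) :
    ∫ y, φ y ∂empirical ι X x = (∑ i, φ (x i)) / Fintype.card ι := by
  simp [empirical, integral_weightedEmpirical (fun _ ↦ one_pos) x hφ]

lemma abs_integral_empirical_sub_le {φ : X → ℝ} (hφ : Measurable φ) {B : ℝ≥0}
    (hB : ∀ x, |φ x| ≤ B) {I : Finset ι} {x y : ι → X} (hxy : ∀ i ∉ I, y i = x i) :
    |∫ z, φ z ∂empirical ι X y - ∫ z, φ z ∂empirical ι X x|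
      ≤ 2 * I.card / Fintype.card ι * B := by
  have hterm (i : ι) : |φ (y i) - φ (x i)| ≤ 2 * B :=
    (abs_sub _ _).trans (by linarith [hB (y i), hB (x i)])
  have hsum : |∑ i, (φ (y i) - φ (x i))| ≤ I.card * (2 * B) :=
    calc |∑ i, (φ (y i) - φ (x i))|
        = |∑ i ∈ I, (φ (y i) - φ (x i))| := by
          congr 1
          refine (Finset.sum_subset (Finset.subset_univ I) fun i _ hi ↦ ?_).symm
          rw [hxy i hi, sub_self]
      _ ≤ ∑ i ∈ I, |φ (y i) - φ (x i)| := Finset.abs_sum_le_sum_abs _ _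
      _ ≤ I.card * (2 * B) := by
          simpa using Finset.sum_le_card_nsmul I _ _ fun i _ ↦ hterm i
  rw [integral_empirical _ hφ, integral_empirical _ hφ, ← sub_div, ← Finset.sum_sub_distrib,
    abs_div, Nat.abs_cast]
  calc |∑ i, (φ (y i) - φ (x i))| / Fintype.card ι
      ≤ I.card * (2 * B) / Fintype.card ι := by gcongr
    _ = 2 * I.card / Fintype.card ι * B := by ring

end WeightedEmpirical

section LpApprox

variable {Ω X Y : Type*} [MeasurableSpace Ω] [MeasurableSpace X] [MeasurableSpace Y]
  {P : Measure Ω} {p ε : ℝ≥0}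

lemma integrable_of_abs_le {μ : Measure X} [IsFiniteMeasure μ] {φ : X → ℝ} {B : ℝ≥0}
    (hφ : Measurable φ) (hB : ∀ x, |φ x| ≤ B) : Integrable φ μ :=
  .of_bound hφ.aestronglyMeasurable B (ae_of_all _ hB)

lemma abs_integral_le_of_abs_le {μ : Measure X} [IsProbabilityMeasure μ] {φ : X → ℝ} {B : ℝ≥0}
    (hB : ∀ x, |φ x| ≤ B) : |∫ x, φ x ∂μ| ≤ B := by
  simpa using norm_integral_le_of_norm_le_const (μ := μ) (f := φ) (ae_of_all _ hB)

/-- The random measure `M ω`, `ω ∼ P`, approximates `μ` with error `ε` in `L^p`, relative to the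
sup norm of the test function: `‖(φ, M) - (φ, μ)‖_p ≤ ε ‖φ‖_∞`. -/
def LpApprox (P : Measure Ω) (p ε : ℝ≥0) (M : Kernel Ω X) (μ : Measure X) : Prop :=
  ∀ (φ : X → ℝ) (B : ℝ≥0), Measurable φ → (∀ x, |φ x| ≤ B) →
    eLpNorm (fun ω ↦ ∫ x, φ x ∂M ω - ∫ x, φ x ∂μ) p P ≤ ↑(ε * B)

namespace LpApprox

variable {M M' : Kernel Ω X} {μ : Measure X}

lemma integral_rpow_le (h : LpApprox P p ε M μ) (hp : p ≠ 0) {φ : X → ℝ} {B : ℝ≥0}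
    (hφ : Measurable φ) (hB : ∀ x, |φ x| ≤ B) :
    (∫ ω, |∫ x, φ x ∂M ω - ∫ x, φ x ∂μ| ^ (p : ℝ) ∂P) ^ (p⁻¹ : ℝ) ≤ ε * B := by
  have hmeas : AEStronglyMeasurable (fun ω ↦ ∫ x, φ x ∂M ω - ∫ x, φ x ∂μ) P :=
    (hφ.stronglyMeasurable.integral_kernel.sub stronglyMeasurable_const).aestronglyMeasurable
  have hLp := lpNorm_nnreal_eq_integral_norm_rpow hp hmeas
  simp only [Real.norm_eq_abs] at hLp
  rw [← hLp, ← toReal_eLpNorm hmeas]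
  exact ENNReal.toReal_le_of_le_ofReal (by positivity) <| by
    simpa [← NNReal.coe_mul] using h φ B hφ hB

lemma comp [IsFiniteKernel M] [IsFiniteMeasure μ] (h : LpApprox P p ε M μ) (τ : Kernel X Y)
    [IsMarkovKernel τ] : LpApprox P p ε (τ ∘ₖ M) (τ ∘ₘ μ) := by
  intro φ B hφ hB
  simp only [Kernel.comp_apply, integral_comp_measure (integrable_of_abs_le hφ hB)]
  exact h _ B hφ.stronglyMeasurable.integral_kernel.measurable
    fun x ↦ abs_integral_le_of_abs_le hB

lemma of_abs_integral_sub_le [IsProbabilityMeasure P] (hp : 1 ≤ p) (h : LpApprox P p ε M μ)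
    {δ : ℝ≥0}
    (hδ : ∀ (φ : X → ℝ) (B : ℝ≥0), Measurable φ → (∀ x, |φ x| ≤ B) →
      ∀ ω, |∫ x, φ x ∂M' ω - ∫ x, φ x ∂M ω| ≤ δ * B) :
    LpApprox P p (δ + ε) M' μ := by
  intro φ B hφ hB
  have hp' : (1 : ℝ≥0∞) ≤ p := by exact_mod_cast hp
  have hmeas (K : Kernel Ω X) : Measurable fun ω ↦ ∫ x, φ x ∂K ω :=
    hφ.stronglyMeasurable.integral_kernel.measurable
  have hdiff : eLpNorm (fun ω ↦ ∫ x, φ x ∂M' ω - ∫ x, φ x ∂M ω) p P ≤ ↑(δ * B) := by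
    simpa [← NNReal.coe_mul, ENNReal.ofReal_coe_nnreal] using
      eLpNorm_le_of_ae_bound (p := p) (μ := P)
        (f := fun ω ↦ ∫ x, φ x ∂M' ω - ∫ x, φ x ∂M ω) (ae_of_all _ (hδ φ B hφ hB))
  calc eLpNorm (fun ω ↦ ∫ x, φ x ∂M' ω - ∫ x, φ x ∂μ) p P
      = eLpNorm ((fun ω ↦ ∫ x, φ x ∂M' ω - ∫ x, φ x ∂M ω)
          + fun ω ↦ ∫ x, φ x ∂M ω - ∫ x, φ x ∂μ) p P := by
        congr 1; ext ω; simp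
    _ ≤ ↑(δ * B) + ↑(ε * B) :=
        (eLpNorm_add_le ((hmeas M').sub (hmeas M)).aestronglyMeasurable
          ((hmeas M).sub_const _).aestronglyMeasurable hp').trans
          (add_le_add hdiff (h φ B hφ hB))
    _ = ↑((δ + ε) * B) := by rw [add_mul, ENNReal.coe_add]

variable {ι : Type*} [Fintype ι]

lemma empirical_pi [Nonempty ι] (hp : p ≠ 0) (μ : Measure X) [IsProbabilityMeasure μ] :
    LpApprox (Measure.pi fun _ : ι ↦ μ) p (subgaussianLpConst p / NNReal.sqrt (Fintype.card ι))
      (empirical ι X) μ := by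
  intro φ B hφ hB
  simpa [integral_empirical _ hφ] using
    eLpNorm_average_sub_average_integral_le (ι := ι) (μ := fun _ ↦ μ) hp hφ hB

lemma empirical_piKernel [IsProbabilityMeasure P] (hp : 1 ≤ p) (h : LpApprox P p ε M μ)
    {κ : ι → Kernel Ω X} [∀ i, IsMarkovKernel (κ i)]
    (hM : ∀ (φ : X → ℝ) (B : ℝ≥0), Measurable φ → (∀ x, |φ x| ≤ B) →
      ∀ ω, ∫ x, φ x ∂M ω = (∑ i, ∫ x, φ x ∂κ i ω) / Fintype.card ι) :
    LpApprox (piKernel κ ∘ₘ P) p (subgaussianLpConst p / NNReal.sqrt (Fintype.card ι) + ε)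
      (empirical ι X) μ := by
  intro φ B hφ hB
  have hfiber (ω : Ω) : eLpNorm (fun x ↦ ∫ y, φ y ∂empirical ι X x - ∫ y, φ y ∂M ω) p
      (piKernel κ ω) ≤ ↑(subgaussianLpConst p / NNReal.sqrt (Fintype.card ι) * B) := by
    simp only [hM φ B hφ hB ω, integral_empirical _ hφ]
    exact eLpNorm_average_sub_average_integral_le (zero_lt_one.trans_le hp).ne' hφ hB
  calc eLpNorm (fun x ↦ ∫ y, φ y ∂empirical ι X x - ∫ y, φ y ∂μ) p (piKernel κ ∘ₘ P)
      ≤ ↑(subgaussianLpConst p / NNReal.sqrt (Fintype.card ι) * B)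
        + eLpNorm (fun ω ↦ ∫ y, φ y ∂M ω - ∫ y, φ y ∂μ) p P :=
        eLpNorm_sub_const_comp_measure_le hp
          hφ.stronglyMeasurable.integral_kernel.measurable
          hφ.stronglyMeasurable.integral_kernel.measurable _ hfiber
    _ ≤ ↑(subgaussianLpConst p / NNReal.sqrt (Fintype.card ι) * B) + ↑(ε * B) := by
        gcongr; exact h φ B hφ hB
    _ = ↑((subgaussianLpConst p / NNReal.sqrt (Fintype.card ι) + ε) * B) := by
        rw [add_mul, ENNReal.coe_add]

end LpApprox

end LpApprox

section BayesUpdate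

variable {Ω X : Type*} [MeasurableSpace Ω] [MeasurableSpace X] {g : X → ℝ} {μ μ' : Measure X}

/-- `μ'` is the posterior obtained from the prior `μ` by Bayes' rule with likelihood `g`, tested on
bounded measurable functions: `(φ, μ') = (φ g, μ) / (g, μ)`. -/
def IsBayesUpdate (g : X → ℝ) (μ μ' : Measure X) : Prop :=
  ∀ φ : X → ℝ, Measurable φ → BddAbove (Set.range fun x ↦ |φ x|) →
    ∫ x, φ x ∂μ' = (∫ x, φ x * g x ∂μ) / ∫ x, g x ∂μ

namespace IsBayesUpdate

lemma measureReal_univ (h : IsBayesUpdate g μ μ') :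
    μ'.real Set.univ = (∫ x, g x ∂μ) / ∫ x, g x ∂μ := by
  simpa using h (fun _ ↦ 1) measurable_const ⟨1, by rintro _ ⟨x, rfl⟩; simp⟩

lemma isProbabilityMeasure (h : IsBayesUpdate g μ μ') (hμ : ∫ x, g x ∂μ ≠ 0) :
    IsProbabilityMeasure μ' := by
  have huniv : μ'.real Set.univ = 1 := by rw [h.measureReal_univ, div_self hμ]
  exact ⟨(ENNReal.toReal_eq_one_iff _).1 huniv⟩

lemma integral_ne_zero [IsProbabilityMeasure μ'] (h : IsBayesUpdate g μ μ') :
    ∫ x, g x ∂μ ≠ 0 := fun hμ ↦ by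
  simpa [hμ] using h.measureReal_univ

end IsBayesUpdate

lemma isBayesUpdate_weightedEmpirical {ι : Type*} [Fintype ι] (hg : Measurable g)
    (hg0 : ∀ x, 0 < g x) (x : ι → X) :
    IsBayesUpdate g (empirical ι X x) (weightedEmpirical ι g hg x) := by
  intro φ hφ _
  rw [integral_weightedEmpirical hg0 x hφ, integral_empirical x (φ := fun y ↦ φ y * g y)
    (hφ.mul hg), integral_empirical x hg]
  rcases isEmpty_or_nonempty ι with _ | _
  · simp
  · rw [div_div_div_cancel_right₀ (by simp)]

lemma abs_div_sub_div_le {a a' b b' B : ℝ} (hb : 0 < b) (hb' : b' ≠ 0) (hB : |a' / b'| ≤ B) :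
    |a' / b' - a / b| ≤ (|a' - a| + B * |b' - b|) / b := by
  have hsplit : a' / b' - a / b = ((a' - a) - a' / b' * (b' - b)) / b := by
    field_simp
    ring
  rw [hsplit, abs_div, abs_of_pos hb]
  gcongr
  calc |(a' - a) - a' / b' * (b' - b)|
      ≤ |a' - a| + |a' / b'| * |b' - b| := by rw [← abs_mul]; exact abs_sub _ _
    _ ≤ |a' - a| + B * |b' - b| := by gcongr

lemma eLpNorm_le_of_abs_le_mul_add {P : Measure Ω} {p : ℝ≥0∞} (hp : 1 ≤ p) {f u v : Ω → ℝ}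
    (hu : AEStronglyMeasurable u P) (hv : AEStronglyMeasurable v P) {c B : ℝ≥0}
    (h : ∀ ω, |f ω| ≤ c * (|u ω| + B * |v ω|)) :
    eLpNorm f p P ≤ c * (eLpNorm u p P + B * eLpNorm v p P) :=
  calc eLpNorm f p P
      ≤ eLpNorm ((c : ℝ) • ((fun ω ↦ ‖u ω‖) + (B : ℝ) • fun ω ↦ ‖v ω‖)) p P := eLpNorm_mono_real h
    _ = c * eLpNorm ((fun ω ↦ ‖u ω‖) + (B : ℝ) • fun ω ↦ ‖v ω‖) p P := by
        rw [eLpNorm_const_smul]; simp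
    _ ≤ c * (eLpNorm (fun ω ↦ ‖u ω‖) p P + eLpNorm ((B : ℝ) • fun ω ↦ ‖v ω‖) p P) := by
        gcongr
        exact eLpNorm_add_le hu.norm (hv.norm.const_smul (B : ℝ)) hp
    _ = c * (eLpNorm u p P + B * eLpNorm v p P) := by
        rw [eLpNorm_const_smul, eLpNorm_norm, eLpNorm_norm]; simp

lemma LpApprox.bayesUpdate {P : Measure Ω} {p ε G b : ℝ≥0} {M M' : Kernel Ω X}
    [IsMarkovKernel M'] (hp : 1 ≤ p) (hg : Measurable g) (hG : ∀ x, |g x| ≤ G)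
    (hb : ∫ x, g x ∂μ = b) (hb0 : b ≠ 0) (h : LpApprox P p ε M μ)
    (hM : ∀ ω, IsBayesUpdate g (M ω) (M' ω)) (hμ : IsBayesUpdate g μ μ') :
    LpApprox P p (2 * G / b * ε) M' μ' := by
  intro φ B hφ hB
  have hp' : (1 : ℝ≥0∞) ≤ p := by exact_mod_cast hp
  have hbdd : BddAbove (Set.range fun x ↦ |φ x|) := ⟨B, by rintro _ ⟨x, rfl⟩; exact hB x⟩
  have hφg (x : X) : |φ x * g x| ≤ ↑(B * G) := by
    rw [abs_mul, NNReal.coe_mul]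
    exact mul_le_mul (hB x) (hG x) (abs_nonneg _) B.coe_nonneg
  have hmeas {ψ : X → ℝ} (hψ : Measurable ψ) :
      AEStronglyMeasurable (fun ω ↦ ∫ x, ψ x ∂M ω - ∫ x, ψ x ∂μ) P :=
    (hψ.stronglyMeasurable.integral_kernel.sub stronglyMeasurable_const).aestronglyMeasurable
  have hratio (ω : Ω) : |∫ x, φ x ∂M' ω - ∫ x, φ x ∂μ'|
      ≤ ↑b⁻¹ * (|∫ x, φ x * g x ∂M ω - ∫ x, φ x * g x ∂μ|
        + B * |∫ x, g x ∂M ω - ∫ x, g x ∂μ|) := by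
    have hpos : 0 < ∫ x, g x ∂μ := by rw [hb]; positivity
    have hw : |∫ x, φ x ∂M' ω| ≤ B := abs_integral_le_of_abs_le hB
    rw [hM ω φ hφ hbdd] at hw ⊢
    rw [hμ φ hφ hbdd, NNReal.coe_inv, ← hb, ← div_eq_inv_mul]
    exact abs_div_sub_div_le hpos (hM ω).integral_ne_zero hw
  calc eLpNorm (fun ω ↦ ∫ x, φ x ∂M' ω - ∫ x, φ x ∂μ') p P
      ≤ ↑b⁻¹ * (eLpNorm (fun ω ↦ ∫ x, φ x * g x ∂M ω - ∫ x, φ x * g x ∂μ) p P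
          + B * eLpNorm (fun ω ↦ ∫ x, g x ∂M ω - ∫ x, g x ∂μ) p P) :=
        eLpNorm_le_of_abs_le_mul_add hp' (hmeas (hφ.mul hg)) (hmeas hg) hratio
    _ ≤ ↑b⁻¹ * (↑(ε * (B * G)) + B * ↑(ε * G)) := by
        gcongr
        · exact h (fun x ↦ φ x * g x) (B * G) (hφ.mul hg) hφg
        · exact h g G hg hG
    _ = ↑(2 * G / b * ε * B) := by
        norm_cast
        rw [div_eq_mul_inv]
        ring

end BayesUpdate

section NudgedParticleFilter

variable {ι X : Type*} [MeasurableSpace X]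

/-- The nudging step: the particles with index in `I` are moved by `α`. -/
def nudge [DecidableEq ι] (α : X → X) (I : Finset ι) (x : ι → X) : ι → X :=
  I.piecewise (α ∘ x) x

lemma measurable_nudge [DecidableEq ι] {α : X → X} (hα : Measurable α) (I : Finset ι) :
    Measurable (nudge α I) := by
  refine measurable_pi_lambda _ fun i ↦ ?_
  by_cases hi : i ∈ I
  · simp only [nudge, I.piecewise_eq_of_mem _ _ hi]
    exact hα.comp (measurable_pi_apply i)
  · simpa only [nudge, I.piecewise_eq_of_notMem _ _ hi] using measurable_pi_apply i

variable [Fintype ι]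

/-- The sampling step: every particle moves independently of the others according to `τ`. -/
noncomputable def mutation (ι : Type*) [Fintype ι] (τ : Kernel X X) [IsMarkovKernel τ] :
    Kernel (ι → X) (ι → X) :=
  piKernel fun i ↦ τ.comap (fun x : ι → X ↦ x i) (measurable_pi_apply i)

instance (τ : Kernel X X) [IsMarkovKernel τ] : IsMarkovKernel (mutation ι τ) :=
  inferInstanceAs (IsMarkovKernel (piKernel _))

/-- One step of the nudged particle filter, as a transition kernel on particle configurations:
move the particles by `τ`, nudge those with index in `I`, and resample them independently with
weights proportional to the likelihood `g`. -/
noncomputable def nudgedStep [DecidableEq ι] [Nonempty ι] (τ : Kernel X X) [IsMarkovKernel τ]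
    {g : X → ℝ} (hg : Measurable g) (hg0 : ∀ x, 0 < g x) {α : X → X} (hα : Measurable α)
    (I : Finset ι) : Kernel (ι → X) (ι → X) :=
  haveI := isMarkovKernel_weightedEmpirical (ι := ι) (hg := hg) hg0
  piKernel (fun _ : ι ↦ (weightedEmpirical ι g hg).comap (nudge α I) (measurable_nudge hα I)) ∘ₖ
    mutation ι τ

variable {τ : Kernel X X} [IsMarkovKernel τ] {g : X → ℝ} {hg : Measurable g}
  {hg0 : ∀ x, 0 < g x} {α : X → X} {I : Finset ι}

instance [DecidableEq ι] [Nonempty ι] {hα : Measurable α} :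
    IsMarkovKernel (nudgedStep τ hg hg0 hα I) := by
  have := isMarkovKernel_weightedEmpirical (ι := ι) (hg := hg) hg0
  unfold nudgedStep
  infer_instance

variable {P : Measure (ι → X)} [IsProbabilityMeasure P] {p ε r : ℝ≥0}
  {μ μ' : Measure X}

namespace LpApprox

lemma empirical_mutation [Nonempty ι] [IsFiniteMeasure μ] (hp : 1 ≤ p)
    (h : LpApprox P p ε (empirical ι X) μ) :
    LpApprox (mutation ι τ ∘ₘ P) p (subgaussianLpConst p / NNReal.sqrt (Fintype.card ι) + ε)
      (empirical ι X) (τ ∘ₘ μ) := by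
  refine (h.comp τ).empirical_piKernel hp fun φ B hφ hB x ↦ ?_
  rw [Kernel.comp_apply, integral_comp_measure (integrable_of_abs_le hφ hB),
    integral_empirical x hφ.stronglyMeasurable.integral_kernel.measurable]
  rfl

variable [DecidableEq ι]

lemma empirical_comap_nudge (hp : 1 ≤ p) (h : LpApprox P p ε (empirical ι X) μ)
    (hα : Measurable α) (hI : 2 * I.card / Fintype.card ι ≤ r) :
    LpApprox P p (r + ε) ((empirical ι X).comap (nudge α I) (measurable_nudge hα I)) μ := by
  refine h.of_abs_integral_sub_le hp fun φ B hφ hB x ↦ ?_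
  have hagree : ∀ i ∉ I, nudge α I x i = x i := fun i hi ↦ I.piecewise_eq_of_notMem _ _ hi
  refine (abs_integral_empirical_sub_le hφ hB hagree).trans ?_
  gcongr
  exact_mod_cast hI

theorem empirical_nudgedStep [Nonempty ι] {b G : ℝ≥0} [IsFiniteMeasure μ] (hp : 1 ≤ p)
    (h : LpApprox P p ε (empirical ι X) μ) {hα : Measurable α}
    (hI : 2 * I.card / Fintype.card ι ≤ r) (hG : ∀ x, g x ≤ G)
    (hb : ∫ x, g x ∂(τ ∘ₘ μ) = b) (hb0 : b ≠ 0) (hμ : IsBayesUpdate g (τ ∘ₘ μ) μ') :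
    LpApprox (nudgedStep τ hg hg0 hα I ∘ₘ P) p
      (subgaussianLpConst p / NNReal.sqrt (Fintype.card ι)
        + 2 * G / b * (r + (subgaussianLpConst p / NNReal.sqrt (Fintype.card ι) + ε)))
      (empirical ι X) μ' := by
  have := isMarkovKernel_weightedEmpirical (ι := ι) (hg := hg) hg0
  set weighted : Kernel (ι → X) X :=
    (weightedEmpirical ι g hg).comap (nudge α I) (measurable_nudge hα I)
  have hnudged := (h.empirical_mutation (τ := τ) hp).empirical_comap_nudge hp hα hI
  have hweighted := hnudged.bayesUpdate (M' := weighted) hp hg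
    (fun x ↦ (abs_of_pos (hg0 x)).trans_le (hG x)) hb hb0
    (fun x ↦ isBayesUpdate_weightedEmpirical hg hg0 (nudge α I x)) hμ
  have hresampled := hweighted.empirical_piKernel (ι := ι) (κ := fun _ ↦ weighted) hp
    fun φ B _ _ x ↦ by simp
  rwa [Measure.comp_assoc] at hresampled

end LpApprox

end NudgedParticleFilter

section Convergence

variable {X : Type*} [MeasurableSpace X]

theorem exists_lpApprox_nudgedParticleFilter {π : ℕ → Measure X} [IsProbabilityMeasure (π 0)]
    {τ : ℕ → Kernel X X} [∀ s, IsMarkovKernel (τ s)] {g : ℕ → X → ℝ}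
    (hg : ∀ s, Measurable (g s)) (hg0 : ∀ s x, 0 < g s x) (hgb : ∀ s, BddAbove (Set.range (g s)))
    (hnorm : ∀ s, 0 < ∫ x, g (s + 1) x ∂(τ (s + 1) ∘ₘ π s))
    (hπ : ∀ s, IsBayesUpdate (g (s + 1)) (τ (s + 1) ∘ₘ π s) (π (s + 1)))
    {α : ℕ → X → X} (hα : ∀ s, Measurable (α s)) {p : ℝ≥0} (hp : 1 ≤ p) (t : ℕ) :
    ∃ c : ℝ≥0, ∀ (N : ℕ) [NeZero N] (I : ℕ → Finset (Fin N)),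
      (∀ s, ((I s).card : ℝ≥0) ≤ NNReal.sqrt N) → ∀ ν : ℕ → Measure (Fin N → X),
      ν 0 = Measure.pi (fun _ ↦ π 0) →
      (∀ s, ν (s + 1) = nudgedStep (τ (s + 1)) (hg (s + 1)) (hg0 (s + 1)) (hα (s + 1)) (I (s + 1))
        ∘ₘ ν s) →
      IsProbabilityMeasure (ν t) ∧
        LpApprox (ν t) p (c / NNReal.sqrt N) (empirical (Fin N) X) (π t) := by
  have hprob (s : ℕ) : IsProbabilityMeasure (π s) := by
    cases s with
    | zero => assumption
    | succ s => exact (hπ s).isProbabilityMeasure (hnorm s).ne'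
  induction t with
  | zero =>
    refine ⟨subgaussianLpConst p, fun N _ I _ ν hν0 _ ↦ ?_⟩
    rw [hν0]
    refine ⟨inferInstance, ?_⟩
    simpa using LpApprox.empirical_pi (ι := Fin N) (zero_lt_one.trans_le hp).ne' (π 0)
  | succ t ih =>
    obtain ⟨c, hc⟩ := ih
    obtain ⟨G, hG⟩ := hgb (t + 1)
    have hG' (x : X) : g (t + 1) x ≤ G.toNNReal := (hG ⟨x, rfl⟩).trans G.le_coe_toNNReal
    have hnorm_t := hnorm t
    lift ∫ x, g (t + 1) x ∂(τ (t + 1) ∘ₘ π t) to ℝ≥0 using hnorm_t.le with b hb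
    refine ⟨subgaussianLpConst p + 2 * G.toNNReal / b * (2 + (subgaussianLpConst p + c)),
      fun N _ I hI ν hν0 hν ↦ ?_⟩
    obtain ⟨_, happrox⟩ := hc N I hI ν hν0 hν
    have hnudged : 2 * ((I (t + 1)).card : ℝ≥0) / Fintype.card (Fin N) ≤ 2 / NNReal.sqrt N := by
      rw [Fintype.card_fin, mul_div_assoc, div_eq_mul_inv 2, ← nnreal_sqrt_div_self]
      gcongr
      exact hI (t + 1)
    rw [hν t]
    refine ⟨inferInstance, ?_⟩
    convert happrox.empirical_nudgedStep hp hnudged hG' hb.symm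
      (NNReal.coe_pos.1 hnorm_t).ne' (hπ t) using 1
    rw [Fintype.card_fin]
    ring

end Convergence

/-- Convergence of the nudged particle filter (Theorem 1): for a state-space model with
positive bounded likelihoods, the NuPF — which nudges at most `M ≤ √N` particles by an
arbitrary map `α_t` before weighting and multinomial resampling — satisfies
`‖(φ,π_t^N) − (φ,π_t)‖_p ≤ c_{t,p}‖φ‖_∞/√N` with `c_{t,p}` independent of `N`. -/
theorem stmt_15 {X : Type*} [MeasurableSpace X]
    (π0 : Measure X) [IsProbabilityMeasure π0]
    (τ : ℕ → Kernel X X) (hτ : ∀ s, IsMarkovKernel (τ s))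
    (g : ℕ → X → ℝ) (hgm : ∀ s, Measurable (g s)) (hgpos : ∀ s x, 0 < g s x)
    (hgb : ∀ s, BddAbove (Set.range (g s)))
    (π ξ : ℕ → Measure X)
    -- the optimal filter: prediction and Bayes update
    (hπ0 : π 0 = π0)
    (hξ : ∀ s, ξ (s + 1) = (π s).bind fun x => τ (s + 1) x)
    (hgpred : ∀ s, 0 < ∫ x, g (s + 1) x ∂(ξ (s + 1)))
    (hπ : ∀ s (φ : X → ℝ), Measurable φ → BddAbove (Set.range fun x => |φ x|) →
      ∫ x, φ x ∂(π (s + 1)) =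
        (∫ x, φ x * g (s + 1) x ∂(ξ (s + 1))) / ∫ x, g (s + 1) x ∂(ξ (s + 1)))
    (α : ℕ → X → X) (hα : ∀ s, Measurable (α s))
    (T t : ℕ) (ht1 : 1 ≤ t) (htT : t ≤ T)
    (p : ℝ) (hp : 1 ≤ p) :
    ∃ c : ℝ, ∀ (N : ℕ), 0 < N →
      ∀ (I : ℕ → Finset (Fin N)), (∀ s, ((I s).card : ℝ) ≤ Real.sqrt N) →
      ∀ (ν : ℕ → Measure (Fin N → X)),
        -- law of the NuPF particle configuration: initialization, and one recursive step
        -- = sampling via the kernel, nudging of the particles in `I`, weighting by the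
        -- likelihood and multinomial resampling
        ν 0 = Measure.pi (fun _ : Fin N => π0) →
        (∀ s, ν (s + 1) = (ν s).bind fun cprev =>
          (Measure.pi fun i => τ (s + 1) (cprev i)).bind fun xb =>
            Measure.pi fun _ : Fin N =>
              ∑ i : Fin N,
                (ENNReal.ofReal
                    (g (s + 1) (if i ∈ I (s + 1) then α (s + 1) (xb i) else xb i)) /
                  ∑ j : Fin N, ENNReal.ofReal
                    (g (s + 1) (if j ∈ I (s + 1) then α (s + 1) (xb j) else xb j))) •
                Measure.dirac (if i ∈ I (s + 1) then α (s + 1) (xb i) else xb i)) →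
      ∀ φ : X → ℝ, Measurable φ → BddAbove (Set.range fun x => |φ x|) →
        (∫ cfg, |(1 / (N : ℝ)) * (∑ i, φ (cfg i)) - ∫ x, φ x ∂(π t)| ^ p ∂(ν t)) ^ (1 / p)
          ≤ c * (⨆ x, |φ x|) / Real.sqrt N := by
  subst hπ0
  lift p to ℝ≥0 using zero_le_one.trans hp
  have hpred (s : ℕ) : ξ (s + 1) = τ (s + 1) ∘ₘ π s := hξ s
  obtain ⟨c, hc⟩ := exists_lpApprox_nudgedParticleFilter (π := π) (τ := τ) hgm hgpos hgb
    (fun s ↦ hpred s ▸ hgpred s) (fun s ↦ hpred s ▸ hπ s) hα (NNReal.one_le_coe.1 hp) t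
  refine ⟨c, fun N hN I hI ν hν0 hν φ hφ hbdd ↦ ?_⟩
  have : NeZero N := ⟨hN.ne'⟩
  have hI' (s : ℕ) : ((I s).card : ℝ≥0) ≤ NNReal.sqrt N := by
    simpa [← NNReal.coe_le_coe] using hI s
  have hν' (s : ℕ) : ν (s + 1) = nudgedStep (τ (s + 1)) (hgm (s + 1)) (hgpos (s + 1))
      (hα (s + 1)) (I (s + 1)) ∘ₘ ν s := hν s
  obtain ⟨-, happrox⟩ := hc N I hI' ν hν0 hν'
  have hsup (x : X) : |φ x| ≤ ⨆ x, |φ x| := le_ciSup hbdd x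
  lift ⨆ x, |φ x| to ℝ≥0 using Real.iSup_nonneg fun _ ↦ abs_nonneg _ with B
  have hp0 : p ≠ 0 := by rintro rfl; norm_num at hp
  simpa [integral_empirical _ hφ, div_eq_inv_mul, mul_assoc] using
    happrox.integral_rpow_le hp0 hφ hsup
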